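/- Suppose that X is an analytic metric space and φ : ℕ^ℕ_* ∖ ℕ^ℕ → X. Then there is a ∧-embedding π : ℕ^{<ℕ} → ℕ^{<ℕ} such that one of the following holds: φ ∘ π̂ is constant; φ ∘ π̂ extends to an injective continuous closed map into X defined on ℕ^ℕ_* ∖ ℕ^ℕ or on ℕ^ℕ_*; or φ ∘ π̂ ∘ p⁻¹ (as a function on ℕ^{<ℕ}) extends to an injective continuous closed map into X defined on one of the following spaces: the discrete space ℕ^{<ℕ}, the one-point compactification ℕ^{<ℕ} ∪ {∞} of the discrete space ℕ^{<ℕ}, the subspace ℕ^{≤ℕ}_* ∖ ℕ^ℕ, the subspace ℕ^{≤ℕ} = ℕ^{<ℕ} ∪ ℕ^ℕ of ℕ^{≤ℕ}_*, or ℕ^{≤ℕ}_* itself. -/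

import Mathlib

open Set Topology TopologicalSpace
open scoped ENNReal

/-- `t` is an initial segment of `b : ℕ → ℕ`. -/
def PrefixFun (t : List ℕ) (b : ℕ → ℕ) : Prop :=
  ∀ (i : ℕ) (h : i < t.length), t.get ⟨i, h⟩ = b i

/-- The meet `s ∧ t`: the longest common initial segment of two finite sequences. -/
def listMeet : List ℕ → List ℕ → List ℕ
  | a :: s, b :: t => if a = b then a :: listMeet s t else []
  | _, _ => []

/-- A `∧`-embedding: an injection preserving meets. -/
def MeetEmbedding (π : List ℕ → List ℕ) : Prop :=
  Function.Injective π ∧ ∀ s t, π (listMeet s t) = listMeet (π s) (π t)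

/-- The induced map on Baire space: `limSeq π b = ⋃ i, π (b ↾ i)`. -/
def limSeq (π : List ℕ → List ℕ) (b : ℕ → ℕ) : ℕ → ℕ := fun n =>
  (π (List.ofFn fun i : Fin (n + 1) => b i)).getD n 0

/-- Points of the space `ℕ^{≤ℕ}_*`: finite sequences, infinite sequences, and
finite sequences followed by `∞`. -/
inductive NStar : Type
  | fin : List ℕ → NStar
  | inf : (ℕ → ℕ) → NStar
  | lim : List ℕ → NStar

namespace NStar

/-- `t ⊑ c`. -/
def PrefixOf (t : List ℕ) : NStar → Prop
  | fin s => t <+: s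
  | inf b => PrefixFun t b
  | lim s => t <+: s

/-- The basic "cylinder" `N_t = {c | t ⊑ c}`. -/
def cyl (t : List ℕ) : Set NStar := {c | PrefixOf t c}

/-- The smallest topology in which every `{t}` and every `N_t` is clopen. -/
instance : TopologicalSpace NStar :=
  TopologicalSpace.generateFrom
    {S | ∃ t : List ℕ, S = {fin t} ∨ S = ({fin t} : Set NStar)ᶜ ∨ S = cyl t ∨ S = (cyl t)ᶜ}

def IsFin (c : NStar) : Prop := ∃ t, c = fin t
def IsInf (c : NStar) : Prop := ∃ b, c = inf b
def IsLim (c : NStar) : Prop := ∃ t, c = lim t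

/-- The extension of `π : ℕ^{<ℕ} → ℕ^{<ℕ}` to `ℕ^{≤ℕ}_*`. -/
def hat (π : List ℕ → List ℕ) : NStar → NStar
  | fin t => fin (π t)
  | inf b => inf (limSeq π b)
  | lim t => lim (π t)

end NStar

/-- `ℕ^ℕ_* = ℕ^{≤ℕ}_* ∖ ℕ^{<ℕ}`. -/
abbrev NNStar : Type := {c : NStar // ¬ c.IsFin}
/-- `ℕ^ℕ_* ∖ ℕ^ℕ = {t⌢⟨∞⟩ : t ∈ ℕ^{<ℕ}}`. -/
abbrev NLim : Type := {c : NStar // c.IsLim}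
/-- The copy of `ℕ^{<ℕ}` inside `ℕ^{≤ℕ}_*` (a discrete subspace). -/
abbrev NFin : Type := {c : NStar // c.IsFin}
/-- `ℕ^{≤ℕ} = ℕ^{<ℕ} ∪ ℕ^ℕ`. -/
abbrev NFinInf : Type := {c : NStar // ¬ c.IsLim}
/-- `ℕ^{≤ℕ}_* ∖ ℕ^ℕ`. -/
abbrev NFinLim : Type := {c : NStar // ¬ c.IsInf}

def infPt (b : ℕ → ℕ) : NNStar :=
  ⟨NStar.inf b, by rintro ⟨t, h⟩; exact NStar.noConfusion h⟩

def limPt (t : List ℕ) : NLim := ⟨NStar.lim t, t, rfl⟩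

def finPt (t : List ℕ) : NFin := ⟨NStar.fin t, t, rfl⟩

/-- The extension `π̂` restricted to `ℕ^ℕ_*`. -/
def hatNN (π : List ℕ → List ℕ) (c : NNStar) : NNStar :=
  ⟨c.1.hat π, by
    obtain ⟨c, hc⟩ := c
    cases c with
    | fin t => exact fun _ => hc ⟨t, rfl⟩
    | inf b => rintro ⟨t, h⟩; exact NStar.noConfusion h
    | lim t => rintro ⟨s, h⟩; exact NStar.noConfusion h⟩

/-- The extension `π̂` restricted to `ℕ^ℕ_* ∖ ℕ^ℕ`. -/
def hatLim (π : List ℕ → List ℕ) (c : NLim) : NLim :=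
  ⟨c.1.hat π, by obtain ⟨c, t, rfl⟩ := c; exact ⟨π t, rfl⟩⟩

def NLim.toNN (c : NLim) : NNStar :=
  ⟨c.1, by obtain ⟨c, t, rfl⟩ := c; rintro ⟨s, h⟩; exact NStar.noConfusion h⟩

def NLim.base (c : NLim) : List ℕ :=
  match c.1 with
  | .lim t => t
  | .fin t => t
  | .inf _ => []

/-- The map `p : t⌢⟨∞⟩ ↦ t`, with values in the discrete copy of `ℕ^{<ℕ}`. -/
def pFin (c : NLim) : NFin := finPt c.base

def NFin.toFinLim (c : NFin) : NFinLim :=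
  ⟨c.1, by obtain ⟨c, t, rfl⟩ := c; rintro ⟨b, h⟩; exact NStar.noConfusion h⟩

def NFin.toFinInf (c : NFin) : NFinInf :=
  ⟨c.1, by obtain ⟨c, t, rfl⟩ := c; rintro ⟨s, h⟩; exact NStar.noConfusion h⟩

/-- A closed continuous embedding of `φ` into `φ'`: a pair of injective continuous closed
maps `πX : X → X'` and `πY : cl(φ[X]) → cl(φ'[X'])` with `φ' ∘ πX = πY ∘ φ`. -/
def ClosedContinuousEmbedding {X Y X' Y' : Type*} [TopologicalSpace X] [TopologicalSpace Y]
    [TopologicalSpace X'] [TopologicalSpace Y'] (φ : X → Y) (φ' : X' → Y') : Prop :=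
  ∃ (πX : X → X') (πY : closure (Set.range φ) → closure (Set.range φ')),
    Continuous πX ∧ Function.Injective πX ∧ IsClosedMap πX ∧
    Continuous πY ∧ Function.Injective πY ∧ IsClosedMap πY ∧
    ∀ x : X, φ' (πX x) = (πY ⟨φ x, subset_closure ⟨x, rfl⟩⟩ : Y')

/-- A topological space is analytic if it is a continuous image of a closed subset of `ℕ^ℕ`. -/
def IsAnalytic (X : Type*) [TopologicalSpace X] : Prop :=
  ∃ C : Set (ℕ → ℕ), IsClosed C ∧ ∃ f : C → X, Continuous f ∧ Function.Surjective f

/-- Baire measurable: preimages of open sets have the Baire property. -/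
def BaireMeasurableFun {X Y : Type*} [TopologicalSpace X] [TopologicalSpace Y]
    (φ : X → Y) : Prop :=
  ∀ V : Set Y, IsOpen V → ∃ U : Set X, IsOpen U ∧ IsMeagre (symmDiff (φ ⁻¹' V) U)

/-- Baire class one: preimages of open sets are `Fσ`. -/
def BaireClassOneFun {X Y : Type*} [TopologicalSpace X] [TopologicalSpace Y]
    (φ : X → Y) : Prop :=
  ∀ V : Set Y, IsOpen V → ∃ F : ℕ → Set X, (∀ n, IsClosed (F n)) ∧ φ ⁻¹' V = ⋃ n, F n

/-- σ-continuous with closed witnesses. -/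
def SigmaContClosed {X Y : Type*} [TopologicalSpace X] [TopologicalSpace Y]
    (φ : X → Y) : Prop :=
  ∃ F : ℕ → Set X, (∀ n, IsClosed (F n)) ∧ (⋃ n, F n) = Set.univ ∧ ∀ n, ContinuousOn φ (F n)

/-- Borel: preimages of open sets are Borel. -/
def BorelFun {X Y : Type*} [TopologicalSpace X] [TopologicalSpace Y] (φ : X → Y) : Prop :=
  ∀ V : Set Y, IsOpen V → @MeasurableSet X (borel X) (φ ⁻¹' V)

/-- The function on `ℕ^ℕ_*` agreeing with `f` on `ℕ^ℕ` and with `g` on `ℕ^ℕ_* ∖ ℕ^ℕ`,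
with values in the topological disjoint union. -/
def combine2 {A B : Type*} (f : (ℕ → ℕ) → A) (g : NLim → B) : NNStar → A ⊕ B := fun c =>
  match c with
  | ⟨.fin t, h⟩ => absurd ⟨t, rfl⟩ h
  | ⟨.inf b, _⟩ => Sum.inl (f b)
  | ⟨.lim t, _⟩ => Sum.inr (g (limPt t))

/-! ### Finite sequences and meets -/

/-- The restriction of an infinite sequence to its first `n` entries. -/
def rst (b : ℕ → ℕ) (n : ℕ) : List ℕ := List.ofFn fun i : Fin n => b i

lemma rst_length (b : ℕ → ℕ) (n : ℕ) : (rst b n).length = n := by simp [rst]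

lemma rst_succ (b : ℕ → ℕ) (n : ℕ) : rst b (n + 1) = rst b n ++ [b n] := by
  unfold rst
  rw [List.ofFn_succ_last]
  simp

lemma eq_nil_or_snoc (b : List ℕ) : b = [] ∨ ∃ t i, b = t ++ [i] := by
  rcases List.eq_nil_or_concat b with rfl | ⟨t, i, h⟩
  · exact .inl rfl
  · exact .inr ⟨t, i, by simpa using h⟩

lemma prefixFun_iff (t : List ℕ) (b : ℕ → ℕ) : PrefixFun t b ↔ t = rst b t.length := by
  constructor
  · intro h
    apply List.ext_getElem
    · simp [rst]
    · intro i h1 h2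
      have := h i h1
      simpa [rst] using this
  · intro h i hi
    have : ∀ (s : List ℕ) (hs : s = rst b t.length) (h' : i < s.length), s.get ⟨i, h'⟩ = b i := by
      rintro s rfl h'
      simp [rst]
    exact this t h hi

lemma prefixFun_rst (b : ℕ → ℕ) (n : ℕ) : PrefixFun (rst b n) b := by
  rw [prefixFun_iff, rst_length]

lemma PrefixFun.mono {s t : List ℕ} {b : ℕ → ℕ} (hst : s <+: t) (h : PrefixFun t b) :
    PrefixFun s b := by
  obtain ⟨r, rfl⟩ := hst
  intro i hi
  have := h i (by simp; omega)
  simpa [List.getElem_append_left hi] using this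

lemma rst_mono (b : ℕ → ℕ) {m n : ℕ} (h : m ≤ n) : rst b m <+: rst b n := by
  induction n, h using Nat.le_induction with
  | base => exact List.prefix_rfl
  | succ n _ ih => rw [rst_succ]; exact ih.trans (List.prefix_append _ _)

lemma prefixFun_comparable {s t : List ℕ} {b : ℕ → ℕ} (hs : PrefixFun s b) (ht : PrefixFun t b) :
    s <+: t ∨ t <+: s := by
  rw [prefixFun_iff] at hs ht
  rw [hs, ht]
  rcases le_total s.length t.length with h | h
  · left; exact rst_mono b h
  · right; exact rst_mono b h

lemma PrefixFun.le_rst {s : List ℕ} {b : ℕ → ℕ} (hs : PrefixFun s b) {n : ℕ}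
    (h : s.length ≤ n) : s <+: rst b n := by
  rw [prefixFun_iff] at hs
  rw [hs]; exact rst_mono b h

lemma prefix_listMeet (u s t : List ℕ) : u <+: listMeet s t ↔ u <+: s ∧ u <+: t := by
  induction s generalizing u t with
  | nil => simp [listMeet]; rintro rfl; simp
  | cons a s ih =>
    cases t with
    | nil => simp [listMeet]; rintro rfl; simp
    | cons b t =>
      cases u with
      | nil => simp
      | cons c u =>
        by_cases h : a = b
        · subst h
          simp [listMeet, List.cons_prefix_cons, ih]; tauto
        · simp [listMeet, h, List.cons_prefix_cons]
          rintro rfl _ rfl; exact absurd rfl h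

lemma listMeet_left (s t : List ℕ) : listMeet s t <+: s :=
  ((prefix_listMeet _ s t).1 List.prefix_rfl).1

lemma listMeet_right (s t : List ℕ) : listMeet s t <+: t :=
  ((prefix_listMeet _ s t).1 List.prefix_rfl).2

lemma prefix_antisymm {s t : List ℕ} (h : s <+: t) (h' : t <+: s) : s = t :=
  h.eq_of_length (le_antisymm h.length_le h'.length_le)

lemma listMeet_eq_left {s t : List ℕ} (h : s <+: t) : listMeet s t = s :=
  prefix_antisymm (listMeet_left s t) ((prefix_listMeet _ _ _).2 ⟨List.prefix_rfl, h⟩)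

lemma listMeet_eq_right {s t : List ℕ} (h : t <+: s) : listMeet s t = t :=
  prefix_antisymm (listMeet_right s t) ((prefix_listMeet _ _ _).2 ⟨h, List.prefix_rfl⟩)

lemma exists_concat_of_prefix {u s : List ℕ} (h : u <+: s) (hne : u ≠ s) :
    ∃ i, u ++ [i] <+: s := by
  obtain ⟨r, rfl⟩ := h
  cases r with
  | nil => simp at hne
  | cons a r => exact ⟨a, by simp⟩

lemma prefix_comparable {s t u : List ℕ} (hs : s <+: u) (ht : t <+: u) : s <+: t ∨ t <+: s :=
  List.prefix_or_prefix_of_prefix hs ht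

lemma concat_prefix_inj {u s : List ℕ} {i j : ℕ} (h : u ++ [i] <+: s) (h' : u ++ [j] <+: s) :
    i = j := by
  have : u ++ [i] <+: u ++ [j] := List.prefix_of_prefix_length_le h h' (by simp)
  have := this.eq_of_length (by simp)
  simpa using this

lemma listMeet_split {u s t : List ℕ} {i j : ℕ} (hij : i ≠ j) (hs : u ++ [i] <+: s)
    (ht : u ++ [j] <+: t) : listMeet s t = u := by
  have h1 : u <+: listMeet s t := (prefix_listMeet _ _ _).2
    ⟨(List.prefix_append _ _).trans hs, (List.prefix_append _ _).trans ht⟩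
  by_contra hne
  obtain ⟨k, hk⟩ := exists_concat_of_prefix h1 (Ne.symm hne)
  have e1 := concat_prefix_inj hs (hk.trans (listMeet_left s t))
  have e2 := concat_prefix_inj ht (hk.trans (listMeet_right s t))
  omega

/-- Either comparable, or they split. -/
lemma list_cases (s t : List ℕ) : s <+: t ∨ t <+: s ∨
    ∃ u i j, i ≠ j ∧ u ++ [i] <+: s ∧ u ++ [j] <+: t := by
  by_cases h1 : listMeet s t = s
  · left; rw [← h1]; exact listMeet_right s t
  by_cases h2 : listMeet s t = t
  · right; left; rw [← h2]; exact listMeet_left s t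
  right; right
  obtain ⟨i, hi⟩ := exists_concat_of_prefix (listMeet_left s t) h1
  obtain ⟨j, hj⟩ := exists_concat_of_prefix (listMeet_right s t) h2
  refine ⟨_, i, j, ?_, hi, hj⟩
  rintro rfl
  have := ((prefix_listMeet _ s t).2 ⟨hi, hj⟩).length_le
  simp at this

lemma MeetEmbedding.mono {π : List ℕ → List ℕ} (h : MeetEmbedding π) {s t : List ℕ}
    (hst : s <+: t) : π s <+: π t := by
  have := h.2 s t
  rw [listMeet_eq_left hst] at this
  rw [this]; exact listMeet_right _ _

lemma MeetEmbedding.length_lt {π : List ℕ → List ℕ} (h : MeetEmbedding π) (t : List ℕ) (i : ℕ) :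
    (π t).length < (π (t ++ [i])).length := by
  have h1 := h.mono (List.prefix_append t [i])
  refine lt_of_le_of_ne h1.length_le fun e => ?_
  have := h.1 (h1.eq_of_length e)
  simp at this

lemma MeetEmbedding.le_length {π : List ℕ → List ℕ} (h : MeetEmbedding π) (t : List ℕ) :
    t.length ≤ (π t).length := by
  induction t using List.reverseRecOn with
  | nil => simp
  | append_singleton t i ih =>
    have := h.length_lt t i
    simp; omega

lemma MeetEmbedding.comp {π ρ : List ℕ → List ℕ} (h : MeetEmbedding π) (h' : MeetEmbedding ρ) :
    MeetEmbedding (π ∘ ρ) :=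
  ⟨h.1.comp h'.1, fun s t => by simp only [Function.comp]; rw [h'.2, h.2]⟩

lemma meetEmbedding_of_split {π : List ℕ → List ℕ} (k : List ℕ → ℕ → ℕ)
    (hk : ∀ t i j, i ≠ j → k t i ≠ k t j)
    (h : ∀ t i, π t ++ [k t i] <+: π (t ++ [i])) : MeetEmbedding π := by
  have mono : ∀ s r, π s <+: π (s ++ r) := by
    intro s r
    induction r using List.reverseRecOn with
    | nil => simp
    | append_singleton r i ih =>
      rw [← List.append_assoc]
      exact ih.trans ((List.prefix_append _ _).trans (h _ _))
  have mono' : ∀ {s t}, s <+: t → π s <+: π t := by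
    rintro s _ ⟨r, rfl⟩; exact mono s r
  have meet : ∀ s t, π (listMeet s t) = listMeet (π s) (π t) := by
    intro s t
    rcases list_cases s t with hst | hst | ⟨u, i, j, hij, hi, hj⟩
    · rw [listMeet_eq_left hst, listMeet_eq_left (mono' hst)]
    · rw [listMeet_eq_right hst, listMeet_eq_right (mono' hst)]
    · rw [listMeet_split hij hi hj, listMeet_split (hk u i j hij) ((h u i).trans (mono' hi))
        ((h u j).trans (mono' hj))]
  refine ⟨?_, meet⟩
  have key : ∀ s t, s <+: t → π s = π t → s = t := by
    intro s t hst e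
    by_contra hne
    obtain ⟨i, hi⟩ := exists_concat_of_prefix hst hne
    have := ((h s i).trans (mono' hi)).length_le
    rw [e] at this
    simp at this
  intro s t e
  have h1 : π (listMeet s t) = π s := by rw [meet, e]; exact listMeet_eq_left List.prefix_rfl
  have h2 := key _ _ (listMeet_left s t) h1
  have h3 := key _ _ (listMeet_right s t) (h1.trans e)
  rw [← h2]; exact h3

lemma limSeq_prefix {g : List ℕ → List ℕ} (mono : ∀ s t, s <+: t → g s <+: g t)
    (len : ∀ t, t.length ≤ (g t).length) (b : ℕ → ℕ) (n : ℕ) :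
    PrefixFun (g (rst b n)) (limSeq g b) := by
  intro i hi
  change _ = (g (rst b (i + 1))).getD i 0
  have hlen : i < (g (rst b (i + 1))).length := by
    have := len (rst b (i + 1)); rw [rst_length] at this; omega
  rw [List.getD_eq_getElem _ _ hlen]
  simp only [List.get_eq_getElem]
  rcases le_total n (i + 1) with h | h
  · exact (mono _ _ (rst_mono b h)).getElem hi
  · exact ((mono _ _ (rst_mono b h)).getElem hlen).symm

lemma MeetEmbedding.limSeq_prefix {π : List ℕ → List ℕ} (h : MeetEmbedding π) (b : ℕ → ℕ) (n : ℕ) :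
    PrefixFun (π (rst b n)) (limSeq π b) :=
  _root_.limSeq_prefix (fun _ _ => h.mono) h.le_length b n

/-! ### The fusion lemma -/

/-- A code for finite sequences in which parents precede children. -/
def code (t : List ℕ) : ℕ := Encodable.encode t.reverse

lemma code_injective : Function.Injective code := fun s t h => by
  have := Encodable.encode_injective h
  simpa using this

lemma code_concat (t : List ℕ) (i : ℕ) : code (t ++ [i]) = Nat.pair i (code t) + 1 := by
  simp [code, Encodable.encode_list_cons]

lemma code_lt (t : List ℕ) (i : ℕ) : code t < code (t ++ [i]) := by
  rw [code_concat]; have := Nat.right_le_pair i (code t); omega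

lemma lt_code (t : List ℕ) (i : ℕ) : i < code (t ++ [i]) := by
  rw [code_concat]; have := Nat.left_le_pair i (code t); omega

lemma length_le_code (t : List ℕ) : t.length ≤ code t := by
  induction t using List.reverseRecOn with
  | nil => simp
  | append_singleton t i ih => have := code_lt t i; simp; omega

lemma history_rec {α β : Type*} (m : β → ℕ) (P : (b : β) → ((c : β) → m c < m b → α) → α → Prop)
    (H : ∀ b h, ∃ a, P b h a) : ∃ G : β → α, ∀ b, P b (fun c _ => G c) (G b) := by
  choose step hstep using H
  let G : β → α := (measure m).wf.fix fun b ih => step b fun c hc => ih c hc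
  refine ⟨G, fun b => ?_⟩
  have : G b = step b fun c _ => G c := WellFounded.fix_eq _ _ _
  rw [this]; exact hstep _ _

theorem fusion {S : Type*} (pos : S → List ℕ) (s0 : S)
    (Q : List ℕ → ℕ → Set S → S → S → Prop)
    (H : ∀ t i (A : Set S), A.Finite → ∀ s N, ∃ s', ∃ k ≥ N, pos s ++ [k] <+: pos s' ∧
      Q t i A s s') :
    ∃ ρ : List ℕ → S, ρ [] = s0 ∧ MeetEmbedding (pos ∘ ρ) ∧
      ∀ t i, Q t i {a | ∃ u, code u < code (t ++ [i]) ∧ ρ u = a} (ρ t) (ρ (t ++ [i])) := by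
  have key := history_rec (α := S × ℕ) code
    (fun b h a => (b = [] → a.1 = s0) ∧ ∀ t i (hb : b = t ++ [i]),
      (∀ c hc, (h c hc).2 < a.2) ∧
      pos (h t (by rw [hb]; exact code_lt t i)).1 ++ [a.2] <+: pos a.1 ∧
      Q t i {a | ∃ u, ∃ hu : code u < code b, (h u hu).1 = a}
        (h t (by rw [hb]; exact code_lt t i)).1 a.1) ?_
  · obtain ⟨G, hG⟩ := key
    refine ⟨fun t => (G t).1, (hG []).1 rfl, ?_, ?_⟩
    · apply meetEmbedding_of_split (fun t i => (G (t ++ [i])).2)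
      · intro t i j hij
        have hne : code (t ++ [i]) ≠ code (t ++ [j]) := fun e => hij (by
          simpa using code_injective e)
        rcases lt_or_gt_of_ne hne with h | h
        · exact (((hG (t ++ [j])).2 t j rfl).1 _ h).ne
        · exact (((hG (t ++ [i])).2 t i rfl).1 _ h).ne'
      · intro t i
        exact ((hG (t ++ [i])).2 t i rfl).2.1
    · intro t i
      have := ((hG (t ++ [i])).2 t i rfl).2.2
      simpa using this
  · intro b h
    rcases eq_nil_or_snoc b with rfl | ⟨t, i, rfl⟩
    · exact ⟨(s0, 0), fun _ => rfl, fun t i hb => by simp at hb⟩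
    · have ht : code t < code (t ++ [i]) := code_lt t i
      have fin : {u | code u < code (t ++ [i])}.Finite :=
        Set.Finite.preimage (code_injective.injOn) (Set.finite_lt_nat (code (t ++ [i])))
      have : Finite {u // code u < code (t ++ [i])} := fin
      obtain ⟨N, hN⟩ := (Set.finite_range fun u : {u // code u < code (t ++ [i])} =>
        (h u.1 u.2).2).bddAbove
      obtain ⟨s', k, hk, hp, hq⟩ := H t i {a | ∃ u, ∃ hu : code u < code (t ++ [i]), (h u hu).1 = a}
        ((Set.finite_range fun u : {u // code u < code (t ++ [i])} => (h u.1 u.2).1).subset (by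
          rintro a ⟨u, hu, rfl⟩; exact ⟨⟨u, hu⟩, rfl⟩)) (h t ht).1 (N + 1)
      refine ⟨(s', k), fun hb => by simp at hb, fun t' i' hb => ?_⟩
      have hb' : t = t' ∧ i = i' := by simpa using hb
      obtain ⟨rfl, rfl⟩ := hb'
      refine ⟨fun c hc => ?_, hp, hq⟩
      have := hN ⟨⟨c, hc⟩, rfl⟩
      simp at this ⊢; omega

/-! ### Dense sets of finite sequences and colourings -/

/-- `D` is dense below `u`. -/
def DenseBelow (D : Set (List ℕ)) (u : List ℕ) : Prop :=
  ∀ v, u <+: v → ∃ w, v <+: w ∧ w ∈ D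

lemma DenseBelow.mono {D : Set (List ℕ)} {u v : List ℕ} (h : DenseBelow D u) (huv : u <+: v) :
    DenseBelow D v := fun w hw => h w (huv.trans hw)

lemma exists_embedding_into {D : Set (List ℕ)} {u : List ℕ} (h : DenseBelow D u) :
    ∃ π, MeetEmbedding π ∧ ∀ t, π t ∈ D := by
  obtain ⟨w, huw, hw⟩ := h u List.prefix_rfl
  obtain ⟨ρ, -, hρ, -⟩ := fusion (S := {w // u <+: w ∧ w ∈ D}) (fun s => s.1) ⟨w, huw, hw⟩
    (fun _ _ _ _ _ => True) (by
      intro t i A _ s N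
      obtain ⟨v, hv, hvD⟩ := h (s.1 ++ [N]) (s.2.1.trans (List.prefix_append _ _))
      exact ⟨⟨v, s.2.1.trans ((List.prefix_append _ _).trans hv), hvD⟩, N, le_rfl, hv, trivial⟩)
  exact ⟨_, hρ, fun t => (ρ t).2.2⟩

lemma colouring (P : List ℕ → Prop) :
    ∃ π, MeetEmbedding π ∧ ((∀ t, P (π t)) ∨ ∀ t, ¬ P (π t)) := by
  by_cases h : DenseBelow {t | P t} []
  · obtain ⟨π, h1, h2⟩ := exists_embedding_into h
    exact ⟨π, h1, .inl h2⟩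
  · unfold DenseBelow at h
    push Not at h
    obtain ⟨v, -, hv⟩ := h
    obtain ⟨π, h1, h2⟩ := exists_embedding_into (D := {t | ¬ P t}) (u := v)
      (fun w hw => ⟨w, List.prefix_rfl, hv w hw⟩)
    exact ⟨π, h1, .inr h2⟩

lemma denseBelow_finite_cover {ι : Type*} (I : Set ι) (hI : I.Finite) (E : ι → Set (List ℕ)) :
    ∀ (D : Set (List ℕ)) (u : List ℕ), DenseBelow D u → (D ⊆ ⋃ i ∈ I, E i) →
      ∃ i ∈ I, ∃ v, u <+: v ∧ DenseBelow (D ∩ E i) v := by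
  induction I, hI using Set.Finite.induction_on with
  | empty =>
    intro D u h hc
    obtain ⟨w, -, hw⟩ := h u List.prefix_rfl
    simpa using hc hw
  | @insert a I _ _ ih =>
    intro D u h hc
    by_cases ha : ∃ v, u <+: v ∧ DenseBelow (D ∩ E a) v
    · obtain ⟨v, hv⟩ := ha
      exact ⟨a, by simp, v, hv⟩
    · push Not at ha
      have := ha u List.prefix_rfl
      unfold DenseBelow at this
      push Not at this
      obtain ⟨v, huv, hv⟩ := this
      obtain ⟨i, hi, v', hv', hd⟩ := ih (D ∩ {w | v <+: w}) v
        (fun w hw => by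
          obtain ⟨x, hx, hxD⟩ := h w (huv.trans hw)
          exact ⟨x, hx, hxD, hw.trans hx⟩)
        (fun w hw => by
          have := hc hw.1
          simp only [Set.mem_iUnion, Set.mem_insert_iff, exists_prop] at this ⊢
          obtain ⟨i, rfl | hi, hiw⟩ := this
          · exact absurd ⟨hw.1, hiw⟩ (hv w hw.2)
          · exact ⟨i, hi, hiw⟩)
      refine ⟨i, by simp [hi], v', huv.trans hv', fun w hw => ?_⟩
      obtain ⟨x, hx, hxD⟩ := hd w hw
      exact ⟨x, hx, hxD.1.1, hxD.2⟩

lemma avoid_finite {K : Type*} {g : List ℕ → K}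
    (h : ∀ y u, ¬ DenseBelow {t | g t = y} u) (S : Set K) (hS : S.Finite) (u : List ℕ) :
    ∃ v, u <+: v ∧ ∀ w, v <+: w → g w ∉ S := by
  induction S, hS using Set.Finite.induction_on with
  | empty => exact ⟨u, List.prefix_rfl, by simp⟩
  | @insert a S _ _ ih =>
    obtain ⟨v, huv, hv⟩ := ih
    have := h a v
    unfold DenseBelow at this
    push Not at this
    obtain ⟨v', hv', hv''⟩ := this
    refine ⟨v', huv.trans hv', fun w hw => ?_⟩
    rw [Set.mem_insert_iff, not_or]
    exact ⟨hv'' w hw, hv w (hv'.trans hw)⟩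

/-- Every function on `ℕ^{<ℕ}` is constant or injective on the range of some embedding. -/
lemma const_or_injective {K : Type*} (g : List ℕ → K) :
    ∃ π, MeetEmbedding π ∧ ((∃ y, ∀ t, g (π t) = y) ∨ Function.Injective (g ∘ π)) := by
  by_cases h : ∃ y u, DenseBelow {t | g t = y} u
  · obtain ⟨y, u, h⟩ := h
    obtain ⟨π, h1, h2⟩ := exists_embedding_into h
    exact ⟨π, h1, .inl ⟨y, h2⟩⟩
  · push Not at h
    obtain ⟨ρ, -, hρ, hq⟩ := fusion (S := List ℕ) id [] (fun _ _ A _ s' => ∀ a ∈ A, g s' ≠ g a) (by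
      intro t i A hA s N
      obtain ⟨v, hv, hv'⟩ := avoid_finite h (g '' A) (hA.image g) (s ++ [N])
      exact ⟨v, N, le_rfl, hv, fun a ha e => hv' v List.prefix_rfl ⟨a, ha, e.symm⟩⟩)
    refine ⟨ρ, hρ, .inr ?_⟩
    have key : ∀ s t, code s < code t → g (ρ t) ≠ g (ρ s) := by
      intro s t hst
      rcases eq_nil_or_snoc t with rfl | ⟨t, i, rfl⟩
      · simp [code] at hst
      · exact hq t i _ ⟨s, hst, rfl⟩
    intro s t e
    by_contra hne
    rcases lt_or_gt_of_ne (fun e => hne (code_injective e)) with h | h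
    · exact key s t h e.symm
    · exact key t s h e

/-! ### The topology of `NStar` -/

namespace NStar

lemma isOpen_fin (t : List ℕ) : IsOpen ({fin t} : Set NStar) :=
  TopologicalSpace.isOpen_generateFrom_of_mem ⟨t, .inl rfl⟩

lemma isOpen_fin_compl (t : List ℕ) : IsOpen ({fin t} : Set NStar)ᶜ :=
  TopologicalSpace.isOpen_generateFrom_of_mem ⟨t, .inr (.inl rfl)⟩

lemma isOpen_cyl (t : List ℕ) : IsOpen (cyl t) :=
  TopologicalSpace.isOpen_generateFrom_of_mem ⟨t, .inr (.inr (.inl rfl))⟩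

lemma isOpen_cyl_compl (t : List ℕ) : IsOpen (cyl t)ᶜ :=
  TopologicalSpace.isOpen_generateFrom_of_mem ⟨t, .inr (.inr (.inr rfl))⟩

lemma isClosed_cyl (t : List ℕ) : IsClosed (cyl t) := ⟨isOpen_cyl_compl t⟩

@[simp] lemma mem_cyl_fin {s t : List ℕ} : fin t ∈ cyl s ↔ s <+: t := Iff.rfl
@[simp] lemma mem_cyl_lim {s t : List ℕ} : lim t ∈ cyl s ↔ s <+: t := Iff.rfl
@[simp] lemma mem_cyl_inf {s : List ℕ} {b : ℕ → ℕ} : inf b ∈ cyl s ↔ PrefixFun s b := Iff.rfl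

lemma cyl_nil : cyl [] = Set.univ := by
  ext c; cases c <;> simp [PrefixFun]

lemma cyl_mono {s t : List ℕ} (h : s <+: t) : cyl t ⊆ cyl s := by
  intro c hc
  cases c with
  | fin u => exact h.trans hc
  | lim u => exact h.trans hc
  | inf b => exact PrefixFun.mono h hc

lemma cyl_comparable {s t : List ℕ} {c : NStar} (hs : c ∈ cyl s) (ht : c ∈ cyl t) :
    s <+: t ∨ t <+: s := by
  cases c with
  | fin u => exact prefix_comparable hs ht
  | lim u => exact prefix_comparable hs ht
  | inf b => exact prefixFun_comparable hs ht

lemma cyl_cases {t : List ℕ} {c : NStar} (h : c ∈ cyl t) :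
    c = fin t ∨ c = lim t ∨ ∃ i, c ∈ cyl (t ++ [i]) := by
  cases c with
  | fin u =>
    by_cases e : t = u
    · left; rw [e]
    · right; right; exact exists_concat_of_prefix h e
  | lim u =>
    by_cases e : t = u
    · right; left; rw [e]
    · right; right; exact exists_concat_of_prefix h e
  | inf b =>
    right; right
    refine ⟨b t.length, ?_⟩
    have := (prefixFun_iff t b).1 h
    have h2 := prefixFun_rst b (t.length + 1)
    rw [rst_succ, ← this] at h2
    exact h2

lemma fin_notMem_cyl (t : List ℕ) (i : ℕ) : fin t ∉ cyl (t ++ [i]) := by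
  intro h; have := List.IsPrefix.length_le h; simp at this

lemma lim_notMem_cyl (t : List ℕ) (i : ℕ) : lim t ∉ cyl (t ++ [i]) := by
  intro h; have := List.IsPrefix.length_le h; simp at this

lemma cyl_concat_disjoint {t : List ℕ} {i j : ℕ} (hij : i ≠ j) {c : NStar}
    (hi : c ∈ cyl (t ++ [i])) (hj : c ∈ cyl (t ++ [j])) : False := by
  rcases cyl_comparable hi hj with h | h
  · have := h.eq_of_length (by simp); simp at this; exact hij this
  · have := h.eq_of_length (by simp); simp at this; exact hij this.symm

lemma lim_nhds_aux {O : Set NStar} (hO : IsOpen O) : ∀ t, lim t ∈ O →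
    ∃ N, ∀ k ≥ N, cyl (t ++ [k]) ⊆ O := by
  have noext : ∀ s t : List ℕ, ∃ N, ∀ k ≥ N, ¬ t ++ [k] <+: s := by
    intro s t
    by_cases h : ∃ k, t ++ [k] <+: s
    · obtain ⟨k, hk⟩ := h
      exact ⟨k + 1, fun k' hk' h' => by have := concat_prefix_inj hk h'; omega⟩
    · push Not at h; exact ⟨0, fun k _ => h k⟩
  induction hO with
  | basic S hS =>
    obtain ⟨s, rfl | rfl | rfl | rfl⟩ := hS
    · intro t h; simp at h
    · intro t _
      obtain ⟨N, hN⟩ := noext s t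
      refine ⟨N, fun k hk c hc => ?_⟩
      rintro rfl
      exact hN k hk hc
    · intro t h
      exact ⟨0, fun k _ => cyl_mono (List.IsPrefix.trans h (List.prefix_append _ _))⟩
    · intro t h
      obtain ⟨N, hN⟩ := noext s t
      refine ⟨N, fun k hk c hc hcs => ?_⟩
      rcases cyl_comparable hc hcs with h1 | h1
      · exact hN k hk h1
      · rcases List.prefix_concat_iff.1 h1 with h2 | h2
        · exact hN k hk (by rw [h2])
        · exact h h2
  | univ => intro t _; exact ⟨0, fun _ _ => Set.subset_univ _⟩
  | inter U V _ _ ihU ihV =>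
    intro t h
    obtain ⟨N, hN⟩ := ihU t h.1
    obtain ⟨M, hM⟩ := ihV t h.2
    exact ⟨max N M, fun k hk => Set.subset_inter (hN k (le_trans (le_max_left _ _) hk))
      (hM k (le_trans (le_max_right _ _) hk))⟩
  | sUnion S _ ih =>
    rintro t ⟨U, hU, h⟩
    obtain ⟨N, hN⟩ := ih U hU t h
    exact ⟨N, fun k hk => (hN k hk).trans (Set.subset_sUnion_of_mem hU)⟩

lemma inf_nhds_aux {O : Set NStar} (hO : IsOpen O) : ∀ b, inf b ∈ O →
    ∃ n, cyl (rst b n) ⊆ O := by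
  induction hO with
  | basic S hS =>
    obtain ⟨s, rfl | rfl | rfl | rfl⟩ := hS
    · intro b h; simp at h
    · intro b _
      refine ⟨s.length + 1, fun c hc => ?_⟩
      rintro rfl
      have := List.IsPrefix.length_le hc
      rw [rst_length] at this; omega
    · intro b h
      exact ⟨s.length, cyl_mono (PrefixFun.le_rst h le_rfl)⟩
    · intro b h
      refine ⟨s.length, fun c hc hcs => h ?_⟩
      have h1 : s <+: rst b s.length := by
        rcases cyl_comparable hc hcs with h1 | h1
        · rw [h1.eq_of_length (rst_length _ _)]
        · exact h1
      exact (prefixFun_rst b _).mono h1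
  | univ => intro b _; exact ⟨0, Set.subset_univ _⟩
  | inter U V _ _ ihU ihV =>
    intro b h
    obtain ⟨N, hN⟩ := ihU b h.1
    obtain ⟨M, hM⟩ := ihV b h.2
    exact ⟨max N M, Set.subset_inter ((cyl_mono (rst_mono b (le_max_left _ _))).trans hN)
      ((cyl_mono (rst_mono b (le_max_right _ _))).trans hM)⟩
  | sUnion S _ ih =>
    rintro b ⟨U, hU, h⟩
    obtain ⟨N, hN⟩ := ih U hU b h
    exact ⟨N, hN.trans (Set.subset_sUnion_of_mem hU)⟩

lemma continuous_criterion {K : Type*} [PseudoMetricSpace K] {F : NStar → K}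
    (hL : ∀ t, ∀ ε > 0, ∃ N, ∀ i ≥ N, ∀ c ∈ cyl (t ++ [i]), dist (F c) (F (lim t)) < ε)
    (hI : ∀ b, ∀ ε > 0, ∃ n, ∀ c ∈ cyl (rst b n), dist (F c) (F (inf b)) < ε) :
    Continuous F := by
  rw [continuous_iff_continuousAt]
  intro c
  rw [ContinuousAt, Metric.tendsto_nhds]
  intro ε hε
  cases c with
  | fin t =>
    filter_upwards [(isOpen_fin t).mem_nhds rfl] with c hc
    rw [Set.mem_singleton_iff.1 hc, dist_self]; exact hε
  | inf b =>
    obtain ⟨n, hn⟩ := hI b ε hε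
    filter_upwards [(isOpen_cyl (rst b n)).mem_nhds (prefixFun_rst b n)] with c hc
    exact hn c hc
  | lim t =>
    obtain ⟨N, hN⟩ := hL t ε hε
    have h1 : (⋂ i ∈ Finset.range N, (cyl (t ++ [i]))ᶜ) ∈ 𝓝 (lim t) := by
      rw [Filter.biInter_finset_mem]
      intro i _
      exact (isOpen_cyl_compl _).mem_nhds (lim_notMem_cyl t i)
    filter_upwards [h1, (isOpen_cyl t).mem_nhds (mem_cyl_lim.2 List.prefix_rfl),
      (isOpen_fin_compl t).mem_nhds (by simp)] with c hc1 hc2 hc3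
    rcases cyl_cases hc2 with rfl | rfl | ⟨i, hi⟩
    · simp at hc3
    · rw [dist_self]; exact hε
    · refine hN i ?_ c hi
      by_contra hlt
      simp only [Set.mem_iInter] at hc1
      exact hc1 i (by simpa using hlt) hi

instance : CompactSpace NStar := by
  rw [← isCompact_univ_iff, isCompact_iff_ultrafilter_le_nhds]
  intro U _
  by_cases hfin : ∃ t, ({fin t} : Set NStar) ∈ U
  · obtain ⟨t, ht⟩ := hfin
    refine ⟨fin t, trivial, ?_⟩
    intro V hV
    exact Filter.mem_of_superset ht (Set.singleton_subset_iff.2 (mem_of_mem_nhds hV))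
  push Not at hfin
  have hnf : ∀ t, ({fin t} : Set NStar)ᶜ ∈ U := fun t =>
    Ultrafilter.compl_mem_iff_notMem.2 (hfin t)
  have hcomp : ∀ s t, cyl s ∈ U → cyl t ∈ U → s <+: t ∨ t <+: s := by
    intro s t hs ht
    obtain ⟨c, hc⟩ := U.nonempty_of_mem (Filter.inter_mem hs ht)
    exact cyl_comparable hc.1 hc.2
  by_cases hmax : ∃ t, cyl t ∈ U ∧ ∀ i, cyl (t ++ [i]) ∉ U
  · obtain ⟨t, ht, hm⟩ := hmax
    refine ⟨lim t, trivial, ?_⟩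
    rw [TopologicalSpace.nhds_generateFrom]
    refine le_iInf₂ fun S hS => ?_
    rw [Filter.le_principal_iff]
    obtain ⟨hmem, s, rfl | rfl | rfl | rfl⟩ := hS
    · simp at hmem
    · exact hnf s
    · exact Filter.mem_of_superset ht (cyl_mono hmem)
    · refine Ultrafilter.compl_mem_iff_notMem.2 fun hs => ?_
      rcases hcomp s t hs ht with h | h
      · exact hmem h
      · obtain ⟨i, hi⟩ := exists_concat_of_prefix h (by rintro rfl; exact hmem List.prefix_rfl)
        exact hm i (Filter.mem_of_superset hs (cyl_mono hi))
  · push Not at hmax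
    choose! nx hnx using hmax
    let g : ℕ → List ℕ := fun n => Nat.rec [] (fun _ t => t ++ [nx t]) n
    have hg : ∀ n, cyl (g n) ∈ U := by
      intro n
      induction n with
      | zero => change cyl [] ∈ U; rw [cyl_nil]; exact Filter.univ_mem
      | succ n ih => exact hnx _ ih
    let b : ℕ → ℕ := fun n => nx (g n)
    have hgb : ∀ n, g n = rst b n := by
      intro n
      induction n with
      | zero => simp [g, rst]
      | succ n ih => rw [rst_succ, ← ih]
    refine ⟨inf b, trivial, ?_⟩
    intro V hV
    obtain ⟨O, hOV, hO, hb⟩ := mem_nhds_iff.1 hV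
    obtain ⟨n, hn⟩ := inf_nhds_aux hO b hb
    have := hg n
    rw [hgb] at this
    exact Filter.mem_of_superset this (hn.trans hOV)

lemma hat_mem_cyl {π : List ℕ → List ℕ} (h : MeetEmbedding π) {t : List ℕ} {c : NStar}
    (hc : c ∈ cyl t) : hat π c ∈ cyl (π t) := by
  cases c with
  | fin u => exact h.mono hc
  | lim u => exact h.mono hc
  | inf b =>
    have h1 := (prefixFun_iff _ _).1 hc
    have := h.limSeq_prefix b t.length
    rw [← h1] at this
    exact this

lemma hat_preimage_cyl {π : List ℕ → List ℕ} (h : MeetEmbedding π) (s : List ℕ) :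
    hat π ⁻¹' cyl s = ∅ ∨ ∃ t, hat π ⁻¹' cyl s = cyl t := by
  by_cases hne : ∃ t, s <+: π t
  · right
    have hne' : ∃ n, ∃ t, s <+: π t ∧ t.length = n := by
      obtain ⟨t, ht⟩ := hne; exact ⟨_, t, ht, rfl⟩
    classical
    obtain ⟨t, ht, hlen⟩ := Nat.find_spec hne'
    have hmin : ∀ u, s <+: π u → t <+: u := by
      intro u hu
      have h1 : s <+: π (listMeet t u) := by
        rw [h.2]; exact (prefix_listMeet _ _ _).2 ⟨ht, hu⟩
      have h2 := Nat.find_min' hne' ⟨_, h1, rfl⟩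
      rw [← hlen] at h2
      have h3 := (listMeet_left t u).eq_of_length (le_antisymm (listMeet_left t u).length_le h2)
      rw [← h3]; exact listMeet_right t u
    refine ⟨t, Set.Subset.antisymm ?_ fun c hc => cyl_mono ht (hat_mem_cyl h hc)⟩
    intro c hc
    cases c with
    | fin u => exact hmin u hc
    | lim u => exact hmin u hc
    | inf b =>
      have hp : PrefixFun s (limSeq π b) := hc
      have h1 := h.limSeq_prefix b s.length
      have h2 : s <+: π (rst b s.length) := by
        rcases prefixFun_comparable hp h1 with h3 | h3
        · exact h3
        · have := h.le_length (rst b s.length)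
          rw [rst_length] at this
          rw [h3.eq_of_length (le_antisymm h3.length_le this)]
      exact (prefixFun_rst b _).mono (hmin _ h2)
  · left
    push Not at hne
    ext c
    simp only [Set.mem_preimage, Set.mem_empty_iff_false, iff_false]
    intro hc
    cases c with
    | fin u => exact hne u hc
    | lim u => exact hne u hc
    | inf b =>
      have hp : PrefixFun s (limSeq π b) := hc
      have h1 := h.limSeq_prefix b s.length
      rcases prefixFun_comparable hp h1 with h3 | h3
      · exact hne _ h3
      · have := h.le_length (rst b s.length)
        rw [rst_length] at this
        refine hne (rst b s.length) ?_
        rw [h3.eq_of_length (le_antisymm h3.length_le this)]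

lemma continuous_hat {π : List ℕ → List ℕ} (h : MeetEmbedding π) : Continuous (hat π) := by
  have hf : ∀ s, hat π ⁻¹' {fin s} = ∅ ∨ ∃ t, hat π ⁻¹' {fin s} = {fin t} := by
    intro s
    by_cases hs : ∃ t, π t = s
    · obtain ⟨t, rfl⟩ := hs
      right
      refine ⟨t, ?_⟩
      ext c
      cases c <;> simp [hat, h.1.eq_iff]
    · left
      push Not at hs
      ext c
      cases c <;> simp [hat, hs]
  refine continuous_generateFrom_iff.2 ?_
  rintro S ⟨s, rfl | rfl | rfl | rfl⟩
  · rcases hf s with e | ⟨t, e⟩ <;> rw [e]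
    · exact isOpen_empty
    · exact isOpen_fin t
  · rw [Set.preimage_compl]
    rcases hf s with e | ⟨t, e⟩ <;> rw [e]
    · simp
    · exact isOpen_fin_compl t
  · rcases hat_preimage_cyl h s with e | ⟨t, e⟩ <;> rw [e]
    · exact isOpen_empty
    · exact isOpen_cyl t
  · rw [Set.preimage_compl]
    rcases hat_preimage_cyl h s with e | ⟨t, e⟩ <;> rw [e]
    · simp
    · exact isOpen_cyl_compl t

end NStar

/-! ### Continuous extension after passing to an embedding -/

open NStar in
theorem exists_extension {K : Type*} [MetricSpace K] [CompactSpace K] (f : List ℕ → K) :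
    ∃ (π : List ℕ → List ℕ) (F : NStar → K), MeetEmbedding π ∧ Continuous F ∧
      ∀ t, F (fin t) = f (π t) := by
  have small : ∀ (D : Set (List ℕ)) (u : List ℕ), DenseBelow D u → ∀ ε > 0,
      ∃ v D' y, u <+: v ∧ v ∈ D' ∧ DenseBelow D' v ∧ D' ⊆ D ∧ ∀ w ∈ D', dist (f w) y < ε := by
    intro D u hD ε hε
    obtain ⟨I, -, hI, hc⟩ := finite_cover_balls_of_compact (isCompact_univ (X := K)) hε
    obtain ⟨y, -, v, huv, hd⟩ := denseBelow_finite_cover I hI (fun y => f ⁻¹' Metric.ball y ε) D u hD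
      (fun w _ => by
        have := hc (Set.mem_univ (f w))
        simpa using this)
    obtain ⟨v', hv', hm⟩ := hd v List.prefix_rfl
    exact ⟨v', _, y, huv.trans hv', hm, hd.mono hv', Set.inter_subset_left, fun w hw => hw.2⟩
  let Inv : List ℕ × Set (List ℕ) × K → Prop := fun p =>
    p.1 ∈ p.2.1 ∧ ∀ N, ∀ ε > 0, ∃ k ≥ N, ∃ v D', p.1 ++ [k] <+: v ∧ v ∈ D' ∧ DenseBelow D' v ∧
      D' ⊆ p.2.1 ∧ ∀ w ∈ D', dist (f w) p.2.2 < ε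
  have hlim : ∀ (D : Set (List ℕ)) (w : List ℕ), DenseBelow D w → w ∈ D → ∃ x, Inv (w, D, x) := by
    intro D w hD hw
    have h1 : ∀ k : ℕ, ∃ v D' y, w ++ [k] <+: v ∧ v ∈ D' ∧ DenseBelow D' v ∧ D' ⊆ D ∧
        ∀ u ∈ D', dist (f u) y < 1 / ((k : ℝ) + 1) := fun k =>
      small D (w ++ [k]) (hD.mono (List.prefix_append _ _)) _ Nat.one_div_pos_of_nat
    choose v D' y h1 h2 h3 h4 h5 using h1
    obtain ⟨x, φ, hφ, hx⟩ := CompactSpace.tendsto_subseq y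
    refine ⟨x, hw, fun N ε hε => ?_⟩
    have e1 : ∀ᶠ m in Filter.atTop, dist (y (φ m)) x < ε / 2 :=
      (Metric.tendsto_nhds.1 hx) _ (half_pos hε)
    have e2 : ∀ᶠ m in Filter.atTop, 1 / ((φ m : ℝ) + 1) < ε / 2 :=
      ((tendsto_one_div_add_atTop_nhds_zero_nat (𝕜 := ℝ)).comp hφ.tendsto_atTop).eventually
        (gt_mem_nhds (half_pos hε))
    obtain ⟨m, hm1, hm2, hm3⟩ := (e1.and (e2.and (hφ.tendsto_atTop.eventually_ge_atTop N))).exists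
    refine ⟨φ m, hm3, v (φ m), D' (φ m), h1 _, h2 _, h3 _, h4 _, fun u hu => ?_⟩
    have := h5 (φ m) u hu
    have := dist_triangle (f u) (y (φ m)) x
    linarith
  obtain ⟨x0, hx0⟩ := hlim Set.univ [] (fun v _ => ⟨v, List.prefix_rfl, trivial⟩) trivial
  let S := {p // Inv p}
  let e : List ℕ → ℕ → ℝ := fun t i => 1 / ((code (t ++ [i]) : ℝ) + 1)
  have he : ∀ t i, 0 < e t i := fun t i => Nat.one_div_pos_of_nat
  obtain ⟨ρ, -, hρ, hq⟩ := fusion (S := S) (fun s => s.1.1) ⟨_, hx0⟩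
    (fun t i _ s s' => s'.1.2.1 ⊆ s.1.2.1 ∧ ∀ w ∈ s'.1.2.1, dist (f w) s.1.2.2 < e t i) (by
      intro t i A _ s N
      obtain ⟨k, hk, v, D', h1, h2, h3, h4, h5⟩ := s.2.2 N (e t i) (he t i)
      obtain ⟨x, hx⟩ := hlim D' v h3 h2
      exact ⟨⟨_, hx⟩, k, hk, h1, h4, h5⟩)
  let D : List ℕ → Set (List ℕ) := fun t => (ρ t).1.2.1
  let x : List ℕ → K := fun t => (ρ t).1.2.2
  let π : List ℕ → List ℕ := fun t => (ρ t).1.1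
  have hD : ∀ s t, s <+: t → D t ⊆ D s := by
    rintro s _ ⟨r, rfl⟩
    induction r using List.reverseRecOn with
    | nil => simp
    | append_singleton r i ih =>
      rw [← List.append_assoc]
      exact (hq _ _).1.trans ih
  have hmem : ∀ t, π t ∈ D t := fun t => (ρ t).2.1
  have hfin : ∀ t i s, t ++ [i] <+: s → dist (f (π s)) (x t) ≤ e t i := fun t i s h =>
    ((hq t i).2 _ (hD _ _ h (hmem s))).le
  have hxl : ∀ t i s, t ++ [i] <+: s → dist (x s) (x t) ≤ e t i := by
    intro t i s h
    refine le_of_forall_pos_le_add fun ε hε => ?_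
    obtain ⟨k, -, v, D', -, h2, -, h4, h5⟩ := (ρ s).2.2 0 ε hε
    have a1 := h5 v h2
    have a2 := (hq t i).2 _ (hD _ _ h (h4 h2))
    have := dist_triangle_left (x s) (x t) (f v)
    change dist (f v) (x s) < ε at a1
    change dist (f v) (x t) < e t i at a2
    linarith
  have hbr : ∀ b : ℕ → ℕ, ∃ y, ∀ n, dist y (x (rst b n)) ≤ e (rst b n) (b n) := by
    intro b
    obtain ⟨y, φ, hφ, hy⟩ := CompactSpace.tendsto_subseq fun m => f (π (rst b m))
    refine ⟨y, fun n => ?_⟩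
    have := (hy.dist (tendsto_const_nhds (x := x (rst b n))))
    refine le_of_tendsto this ?_
    filter_upwards [hφ.tendsto_atTop.eventually_ge_atTop (n + 1)] with m hm
    apply hfin
    rw [← rst_succ]
    exact rst_mono b hm
  choose y hy using hbr
  let F : NStar → K := fun c => match c with
    | fin t => f (π t)
    | lim t => x t
    | inf b => y b
  have hF : ∀ t i, ∀ c ∈ cyl (t ++ [i]), dist (F c) (x t) ≤ e t i := by
    intro t i c hc
    cases c with
    | fin s => exact hfin t i s hc
    | lim s => exact hxl t i s hc
    | inf b =>
      have h1 : t ++ [i] = rst b (t.length + 1) := by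
        simpa using (prefixFun_iff _ _).1 hc
      rw [rst_succ] at h1
      obtain ⟨h2, h3⟩ := List.append_inj' h1 rfl
      have h3 : i = b t.length := by simpa using h3
      have := hy b t.length
      rw [← h2, ← h3] at this
      exact this
  have hsmall : ∀ ε > (0 : ℝ), ∃ N : ℕ, ∀ n ≥ N, 1 / ((n : ℝ) + 1) < ε := by
    intro ε hε
    obtain ⟨N, hN⟩ := exists_nat_one_div_lt hε
    refine ⟨N, fun n hn => lt_of_le_of_lt ?_ hN⟩
    exact Nat.one_div_le_one_div hn
  refine ⟨π, F, hρ, continuous_criterion ?_ ?_, fun t => rfl⟩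
  · intro t ε hε
    obtain ⟨N, hN⟩ := hsmall ε hε
    exact ⟨N, fun i hi c hc => (hF t i c hc).trans_lt (hN _ (hi.le.trans (lt_code t i).le))⟩
  · intro b ε hε
    obtain ⟨N, hN⟩ := hsmall (ε / 2) (half_pos hε)
    refine ⟨N + 1, fun c hc => ?_⟩
    rw [rst_succ] at hc
    have h1 := hF _ _ c hc
    have h2 := hy b N
    have h3 : e (rst b N) (b N) < ε / 2 := by
      apply hN
      have := length_le_code (rst b N ++ [b N])
      simp [rst_length] at this
      omega
    have := dist_triangle_right (F c) (y b) (x (rst b N))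
    change dist (F c) (y b) < ε
    linarith

/-! ### Meagre sets -/

/-- A combinatorial form of meagreness for subsets of Baire space. -/
def Mgr (B : Set (ℕ → ℕ)) : Prop :=
  ∃ D : ℕ → Set (List ℕ), (∀ n, DenseBelow (D n) []) ∧ ∀ b ∈ B, ∃ n, ∀ w ∈ D n, ¬ PrefixFun w b

lemma Mgr.mono {A B : Set (ℕ → ℕ)} (h : Mgr B) (hAB : A ⊆ B) : Mgr A := by
  obtain ⟨D, h1, h2⟩ := h
  exact ⟨D, h1, fun b hb => h2 b (hAB hb)⟩

lemma Mgr.empty : Mgr ∅ :=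
  ⟨fun _ => Set.univ, fun _ v _ => ⟨v, List.prefix_rfl, trivial⟩, by simp⟩

lemma Mgr.iUnion {ι : Type*} [Countable ι] {B : ι → Set (ℕ → ℕ)} (h : ∀ i, Mgr (B i)) :
    Mgr (⋃ i, B i) := by
  rcases isEmpty_or_nonempty ι with he | he
  · rw [Set.iUnion_of_empty]; exact Mgr.empty
  obtain ⟨g, hg⟩ := exists_surjective_nat ι
  choose D h1 h2 using h
  refine ⟨fun n => D (g (Nat.unpair n).1) (Nat.unpair n).2, fun n => h1 _ _, fun b hb => ?_⟩
  obtain ⟨i, hi⟩ := Set.mem_iUnion.1 hb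
  obtain ⟨m, rfl⟩ := hg i
  obtain ⟨n, hn⟩ := h2 _ b hi
  refine ⟨Nat.pair m n, ?_⟩
  simpa using hn

lemma Mgr.of_local {B : Set (ℕ → ℕ)}
    (h : DenseBelow {v | Mgr (B ∩ {b | PrefixFun v b})} []) : Mgr B := by
  classical
  let V := {v | Mgr (B ∩ {b | PrefixFun v b})}
  have h1 : Mgr (⋃ v : V, B ∩ {b | PrefixFun v.1 b}) := Mgr.iUnion fun v => v.2
  have h2 : Mgr {b | ∀ w ∈ V, ¬ PrefixFun w b} :=
    ⟨fun _ => V, fun _ => h, fun b hb => ⟨0, hb⟩⟩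
  have h3 : Mgr (⋃ i : Bool, if i then (⋃ v : V, B ∩ {b | PrefixFun v.1 b}) else
      {b | ∀ w ∈ V, ¬ PrefixFun w b}) := Mgr.iUnion (by
        intro i
        cases i
        · exact h2
        · exact h1)
  refine h3.mono fun b hb => ?_
  rw [Set.mem_iUnion]
  by_cases hw : ∀ w ∈ V, ¬ PrefixFun w b
  · exact ⟨false, by simpa using hw⟩
  · push Not at hw
    obtain ⟨w, hw, hwb⟩ := hw
    refine ⟨true, ?_⟩
    simp only [if_true]
    exact Set.mem_iUnion.2 ⟨⟨w, hw⟩, hb, hwb⟩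

open NStar in
theorem branch_dichotomy {K : Type*} [TopologicalSpace K] [T2Space K] {F : NStar → K}
    (hF : Continuous F) {C : Set (ℕ → ℕ)} (hC : IsClosed C) {h : C → K} (hh : Continuous h) :
    ∃ π, MeetEmbedding π ∧ ((∀ b, F (inf (limSeq π b)) ∈ Set.range h) ∨
      ∀ b, F (inf (limSeq π b)) ∉ Set.range h) := by
  let A : List ℕ → List ℕ → Set (ℕ → ℕ) := fun σ u =>
    {b | PrefixFun u b ∧ ∃ c : C, PrefixFun σ c.1 ∧ F (inf b) = h c}
  let Big : List ℕ → List ℕ → Prop := fun σ u => ∀ v, u <+: v → ¬ Mgr (A σ v)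
  have localize : ∀ σ u, ¬ Mgr (A σ u) → ∃ u', u <+: u' ∧ Big σ u' := by
    intro σ u hu
    by_contra hcon
    simp only [Big] at hcon
    push Not at hcon
    apply hu
    apply Mgr.of_local
    intro w _
    rcases list_cases w u with hwu | huw | ⟨z, i, j, hij, hi, hj⟩
    · obtain ⟨v, hv, hm⟩ := hcon u List.prefix_rfl
      exact ⟨v, hwu.trans hv, hm.mono fun b hb => ⟨hb.2, hb.1.2⟩⟩
    · obtain ⟨v, hv, hm⟩ := hcon w huw
      exact ⟨v, hv, hm.mono fun b hb => ⟨hb.2, hb.1.2⟩⟩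
    · refine ⟨w, List.prefix_rfl, Mgr.empty.mono ?_⟩
      rintro b ⟨⟨hb, -⟩, hb'⟩
      exact (cyl_concat_disjoint (c := inf b) hij (PrefixFun.mono hi hb')
        (PrefixFun.mono hj hb)).elim
  have split : ∀ σ u, ¬ Mgr (A σ u) → ∃ i, ¬ Mgr (A (σ ++ [i]) u) := by
    intro σ u hu
    by_contra hcon
    push Not at hcon
    refine hu ((Mgr.iUnion hcon).mono ?_)
    rintro b ⟨hb, c, hc, e⟩
    refine Set.mem_iUnion.2 ⟨c.1 σ.length, hb, c, ?_, e⟩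
    have := prefixFun_rst c.1 (σ.length + 1)
    rwa [rst_succ, ← (prefixFun_iff _ _).1 hc] at this
  by_cases hm : Mgr (A [] [])
  · obtain ⟨D, hD, hDb⟩ := hm
    obtain ⟨ρ, -, hρ, hq⟩ := fusion (S := List ℕ) id []
      (fun t _ _ _ s' => ∃ w ∈ D t.length, w <+: s') (by
        intro t i _ _ s N
        obtain ⟨w, hw, hwD⟩ := hD t.length (s ++ [N]) List.nil_prefix
        exact ⟨w, N, le_rfl, hw, w, hwD, List.prefix_rfl⟩)
    refine ⟨ρ, hρ, .inr ?_⟩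
    rintro b ⟨c, hc⟩
    obtain ⟨n, hn⟩ := hDb (limSeq ρ b) ⟨by intro i hi; simp at hi, c, by intro i hi; simp at hi, hc.symm⟩
    obtain ⟨w, hw, hp⟩ := hq (rst b n) (b n)
    rw [rst_length] at hw
    rw [← rst_succ] at hp
    have hpre : PrefixFun (ρ (rst b (n + 1))) (limSeq ρ b) := MeetEmbedding.limSeq_prefix hρ b (n + 1)
    exact hn w hw (hpre.mono hp)
  · obtain ⟨u0, -, hu0⟩ := localize _ _ hm
    obtain ⟨ρ, h0, hρ, hq⟩ := fusion (S := {p : List ℕ × List ℕ // Big p.2 p.1}) (fun s => s.1.1)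
      ⟨(u0, []), hu0⟩ (fun _ _ _ s s' => ∃ j, s'.1.2 = s.1.2 ++ [j]) (by
        intro t i _ _ s N
        obtain ⟨j, hj⟩ := split _ _ (s.2 (s.1.1 ++ [N]) (List.prefix_append _ _))
        obtain ⟨u', hu', hb⟩ := localize _ _ hj
        exact ⟨⟨(u', _), hb⟩, N, le_rfl, hu', j, rfl⟩)
    let π : List ℕ → List ℕ := fun t => (ρ t).1.1
    let σ : List ℕ → List ℕ := fun t => (ρ t).1.2
    have hπ : MeetEmbedding π := hρ
    refine ⟨π, hπ, .inl fun b => ?_⟩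
    have hσ : ∀ s t, s <+: t → σ s <+: σ t := by
      rintro s _ ⟨r, rfl⟩
      induction r using List.reverseRecOn with
      | nil => simp
      | append_singleton r i ih =>
        rw [← List.append_assoc]
        obtain ⟨j, hj⟩ := hq (s ++ r) i
        refine ih.trans ?_
        change _ <+: (ρ (s ++ r ++ [i])).1.2
        rw [hj]; exact List.prefix_append _ _
    have hlen : ∀ t, t.length ≤ (σ t).length := by
      intro t
      induction t using List.reverseRecOn with
      | nil => simp
      | append_singleton t i ih =>
        obtain ⟨j, hj⟩ := hq t i
        have : σ (t ++ [i]) = σ t ++ [j] := hj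
        rw [this]; simpa using ih
    have hne : ∀ n, ∃ (y : ℕ → ℕ) (c : C), PrefixFun (π (rst b n)) y ∧ PrefixFun (σ (rst b n)) c.1 ∧
        F (inf y) = h c := by
      intro n
      have := (ρ (rst b n)).2 _ List.prefix_rfl
      by_contra hcon
      push Not at hcon
      refine this (Mgr.empty.mono ?_)
      rintro y ⟨hy, c, hc, e⟩
      exact (hcon y c hy hc e).elim
    choose y c hy hc hyc using hne
    have hcl : Filter.Tendsto (fun n => (c n).1) Filter.atTop (𝓝 (limSeq σ b)) := by
      rw [tendsto_pi_nhds]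
      intro i
      refine tendsto_const_nhds.congr' ?_
      filter_upwards [Filter.eventually_ge_atTop (i + 1)] with n hn
      have hl : i < (σ (rst b n)).length := by
        have := hlen (rst b n); rw [rst_length] at this; omega
      have e1 := hc n i hl
      have e2 := limSeq_prefix hσ hlen b n i hl
      rw [← e1, ← e2]
    have hmem : limSeq σ b ∈ C := hC.mem_of_tendsto hcl (Filter.Eventually.of_forall fun n => (c n).2)
    have hcl' : Filter.Tendsto c Filter.atTop (𝓝 ⟨_, hmem⟩) := tendsto_subtype_rng.2 hcl
    have hyl : Filter.Tendsto (fun n => inf (y n)) Filter.atTop (𝓝 (inf (limSeq π b))) := by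
      intro V hV
      obtain ⟨O, hOV, hO, hb⟩ := mem_nhds_iff.1 hV
      obtain ⟨m, hm⟩ := inf_nhds_aux hO _ hb
      rw [Filter.mem_map]
      filter_upwards [Filter.eventually_ge_atTop m] with n hn
      refine hOV (hm ?_)
      have h1 := (hπ.limSeq_prefix b n)
      have h2 : rst (limSeq π b) m <+: π (rst b n) := by
        have hl : m ≤ (π (rst b n)).length := by
          have := hπ.le_length (rst b n); rw [rst_length] at this; omega
        rw [(prefixFun_iff _ _).1 h1]
        exact rst_mono _ hl
      exact PrefixFun.mono h2 (hy n)
    refine ⟨⟨_, hmem⟩, ?_⟩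
    have t1 := (hh.tendsto _).comp hcl'
    have t2 := (hF.tendsto _).comp hyl
    refine tendsto_nhds_unique t1 (t2.congr fun n => ?_)
    exact hyc n

/-! ### Injectivity -/

open NStar in
theorem injective_refinement {K : Type*} [TopologicalSpace K] [T2Space K] {F : NStar → K}
    (hF : Continuous F) (h : ∀ y u, ¬ DenseBelow {t | F (lim t) = y} u) :
    ∃ π, MeetEmbedding π ∧ ∀ c d, F (hat π c) = F (hat π d) →
      c = d ∨ ∃ t, (c = fin t ∧ d = lim t) ∨ (c = lim t ∧ d = fin t) := by
  have hcl : ∀ a, IsClosed (F '' cyl a) := fun a =>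
    ((isClosed_cyl a).isCompact.image hF).isClosed
  obtain ⟨π, -, hπ, hq⟩ := fusion (S := List ℕ) id []
    (fun _ _ A w v => F (lim w) ∉ F '' cyl v ∧ F (fin w) ∉ F '' cyl v ∧
      ∀ a ∈ A, F (lim w) ∉ F '' cyl a → Disjoint (F '' cyl a) (F '' cyl v)) (by
    intro t i A hA w N
    let Z : Set K := ⋃ a ∈ {a ∈ A | F (lim w) ∉ F '' cyl a}, F '' cyl a
    have hZ : IsClosed Z := (hA.subset (Set.sep_subset _ _)).isClosed_biUnion fun a _ => hcl a
    have hwZ : F (lim w) ∉ Z := by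
      simp only [Z, Set.mem_iUnion, not_exists]
      rintro a ⟨_, ha⟩; exact ha
    obtain ⟨k0, hk0⟩ := lim_nhds_aux (hZ.isOpen_compl.preimage hF) w hwZ
    let k := max k0 N
    obtain ⟨v, hv, hv'⟩ := avoid_finite (g := fun t => F (lim t)) h {F (lim w), F (fin w)}
      (by simp) (w ++ [k])
    have hv'' := hv' v List.prefix_rfl
    have hopen : IsOpen ({F (lim w), F (fin w)} : Set K)ᶜ :=
      (Set.Finite.isClosed (by simp)).isOpen_compl
    obtain ⟨m, hm⟩ := lim_nhds_aux (hopen.preimage hF) v hv''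
    have hm := hm m le_rfl
    have hpre : w ++ [k] <+: v ++ [m] := hv.trans (List.prefix_append _ _)
    refine ⟨v ++ [m], k, le_max_right _ _, hpre, ?_, ?_, ?_⟩
    · rintro ⟨c, hc, e⟩
      exact hm hc (by simp [e])
    · rintro ⟨c, hc, e⟩
      exact hm hc (by simp [e])
    · intro a ha hwa
      rw [Set.disjoint_left]
      rintro _ ⟨c, hc, rfl⟩ ⟨d, hd, e⟩
      refine hk0 k (le_max_left _ _) (cyl_mono hpre hd) ?_
      rw [e]
      simp only [Z, Set.mem_iUnion]
      exact ⟨a, ⟨ha, hwa⟩, c, hc, rfl⟩)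
  have hπ : MeetEmbedding π := hπ
  refine ⟨π, hπ, ?_⟩
  have hdis : ∀ t i j, i ≠ j → Disjoint (F '' cyl (π (t ++ [i]))) (F '' cyl (π (t ++ [j]))) := by
    have aux : ∀ t i j, code (t ++ [i]) < code (t ++ [j]) →
        Disjoint (F '' cyl (π (t ++ [i]))) (F '' cyl (π (t ++ [j]))) := by
      intro t i j hlt
      exact (hq t j).2.2 _ ⟨_, hlt, rfl⟩ (hq t i).1
    intro t i j hij
    have hne : code (t ++ [i]) ≠ code (t ++ [j]) := fun e => hij (by
      simpa using code_injective e)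
    rcases lt_or_gt_of_ne hne with h | h
    · exact aux _ _ _ h
    · exact (aux _ _ _ h).symm
  have same : ∀ t c d, F (hat π c) = F (hat π d) → c ∈ cyl t → d ∈ cyl t := by
    intro t
    induction t using List.reverseRecOn with
    | nil => intro c d _ _; rw [cyl_nil]; trivial
    | append_singleton t i ih =>
      intro c d e hc
      have hd := ih c d e (cyl_mono (List.prefix_append _ _) hc)
      have hc' := hat_mem_cyl hπ hc
      rcases cyl_cases hd with rfl | rfl | ⟨j, hj⟩
      · exact ((hq t i).2.1 ⟨_, hc', e⟩).elim
      · exact ((hq t i).1 ⟨_, hc', e⟩).elim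
      · by_cases hij : i = j
        · rw [hij]; exact hj
        · exact (Set.disjoint_left.1 (hdis t i j hij) ⟨_, hc', rfl⟩
            ⟨_, hat_mem_cyl hπ hj, e.symm⟩).elim
  intro c d e
  have key : ∀ s c d, F (hat π c) = F (hat π d) → (c = fin s ∨ c = lim s) →
      d = fin s ∨ d = lim s := by
    intro s c d e hc
    have hcs : c ∈ cyl s := by rcases hc with rfl | rfl <;> exact List.prefix_rfl
    rcases cyl_cases (same s c d e hcs) with h1 | h1 | ⟨i, hi⟩
    · exact .inl h1
    · exact .inr h1
    · have := same _ d c e.symm hi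
      rcases hc with rfl | rfl
      · exact (fin_notMem_cyl s i this).elim
      · exact (lim_notMem_cyl s i this).elim
  cases c with
  | fin s =>
    rcases key s _ d e (.inl rfl) with rfl | rfl
    · exact .inl rfl
    · exact .inr ⟨s, .inl ⟨rfl, rfl⟩⟩
  | lim s =>
    rcases key s _ d e (.inr rfl) with rfl | rfl
    · exact .inr ⟨s, .inr ⟨rfl, rfl⟩⟩
    · exact .inl rfl
  | inf b =>
    cases d with
    | fin s => have := key s _ (inf b) e.symm (.inl rfl); simp at this
    | lim s => have := key s _ (inf b) e.symm (.inr rfl); simp at this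
    | inf b' =>
      left
      congr 1
      funext n
      have h1 : PrefixFun (rst b (n + 1)) b' := same _ _ _ e (prefixFun_rst b (n + 1))
      have h2 := h1 n (by simp [rst_length])
      have h3 := prefixFun_rst b (n + 1) n (by simp [rst_length])
      rw [← h2, ← h3]

/-! ### Assembly -/

lemma closed_restrict {X Y Z K : Type*} [TopologicalSpace X] [TopologicalSpace Y]
    [TopologicalSpace Z] [TopologicalSpace K] [CompactSpace Y] [T2Space K] {j : X → K}
    (hj : IsEmbedding j) {G : Y → K} (hG : Continuous G) (hGi : Function.Injective G) {e : Z → Y}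
    (he : IsEmbedding e) (hr : ∀ y, G y ∈ Set.range j ↔ y ∈ Set.range e) :
    ∃ g : Z → X, Function.Injective g ∧ Continuous g ∧ IsClosedMap g ∧ ∀ z, j (g z) = G (e z) := by
  have : ∀ z, ∃ x, j x = G (e z) := fun z => (hr _).2 ⟨z, rfl⟩
  choose g hg using this
  have hcomp : j ∘ g = G ∘ e := funext hg
  refine ⟨g, ?_, ?_, ?_, hg⟩
  · intro a b hab
    apply he.injective
    apply hGi
    rw [← hg, ← hg, hab]
  · rw [hj.continuous_iff, hcomp]
    exact hG.comp he.continuous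
  · intro A hA
    obtain ⟨B, hB, rfl⟩ := he.isInducing.isClosed_iff.1 hA
    have : g '' (e ⁻¹' B) = j ⁻¹' (G '' B) := by
      ext x
      constructor
      · rintro ⟨z, hz, rfl⟩
        exact ⟨e z, hz, (hg z).symm⟩
      · rintro ⟨y, hy, hyx⟩
        obtain ⟨z, rfl⟩ := (hr y).1 ⟨x, hyx.symm⟩
        exact ⟨z, hy, hj.injective (by rw [hg, hyx])⟩
    rw [this]
    exact ((hB.isCompact.image hG).isClosed).preimage hj.continuous

section Assembly

open NStar

theorem core {K : Type*} [MetricSpace K] [CompactSpace K] (f : List ℕ → K) {C : Set (ℕ → ℕ)}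
    (hC : IsClosed C) {h : C → K} (hh : Continuous h) :
    ∃ (π : List ℕ → List ℕ) (F : NStar → K), MeetEmbedding π ∧ Continuous F ∧
      (∀ t, F (fin t) = f (π t)) ∧
      ((∀ t, F (lim t) ∈ Set.range h) ∨ ∀ t, F (lim t) ∉ Set.range h) ∧
      ((∀ t, F (lim t) = F (fin t)) ∨ ∀ t, F (lim t) ≠ F (fin t)) ∧
      ((∀ b, F (inf b) ∈ Set.range h) ∨ ∀ b, F (inf b) ∉ Set.range h) ∧
      ((∃ y, ∀ t, F (lim t) = y) ∨ ∀ c d, F c = F d →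
        c = d ∨ ∃ t, (c = fin t ∧ d = lim t) ∨ (c = lim t ∧ d = fin t)) := by
  obtain ⟨π₀, F, hπ₀, hF, hf⟩ := exists_extension f
  obtain ⟨π₁, hπ₁, h₁⟩ := colouring fun t => F (lim t) ∈ Set.range h
  obtain ⟨π₂, hπ₂, h₂⟩ := colouring fun t => F (lim (π₁ t)) = F (fin (π₁ t))
  have hF₂ : Continuous (F ∘ hat π₁ ∘ hat π₂) :=
    hF.comp ((continuous_hat hπ₁).comp (continuous_hat hπ₂))
  obtain ⟨π₃, hπ₃, h₃⟩ := branch_dichotomy hF₂ hC hh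
  have hF₃ : Continuous (F ∘ hat π₁ ∘ hat π₂ ∘ hat π₃) :=
    hF₂.comp (continuous_hat hπ₃)
  have last : ∃ π₄, MeetEmbedding π₄ ∧
      ((∃ y, ∀ t, (F ∘ hat π₁ ∘ hat π₂ ∘ hat π₃) (hat π₄ (lim t)) = y) ∨
        ∀ c d, (F ∘ hat π₁ ∘ hat π₂ ∘ hat π₃) (hat π₄ c) =
          (F ∘ hat π₁ ∘ hat π₂ ∘ hat π₃) (hat π₄ d) →
        c = d ∨ ∃ t, (c = fin t ∧ d = lim t) ∨ (c = lim t ∧ d = fin t)) := by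
    by_cases hd : ∃ y u, DenseBelow {t | (F ∘ hat π₁ ∘ hat π₂ ∘ hat π₃) (lim t) = y} u
    · obtain ⟨y, u, hd⟩ := hd
      obtain ⟨π₄, h1, h2⟩ := exists_embedding_into hd
      exact ⟨π₄, h1, .inl ⟨y, h2⟩⟩
    · push Not at hd
      obtain ⟨π₄, h1, h2⟩ := injective_refinement hF₃ hd
      exact ⟨π₄, h1, .inr h2⟩
  obtain ⟨π₄, hπ₄, h₄⟩ := last
  refine ⟨π₀ ∘ π₁ ∘ π₂ ∘ π₃ ∘ π₄, (F ∘ hat π₁ ∘ hat π₂ ∘ hat π₃) ∘ hat π₄,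
    hπ₀.comp (hπ₁.comp (hπ₂.comp (hπ₃.comp hπ₄))), hF₃.comp (continuous_hat hπ₄),
    fun t => hf _, ?_, ?_, ?_, h₄⟩
  · exact h₁.imp (fun h t => h _) (fun h t => h _)
  · exact h₂.imp (fun h t => h _) (fun h t => h _)
  · exact h₃.imp (fun h b => h (limSeq π₄ b)) (fun h b => h (limSeq π₄ b))

instance : DiscreteTopology NFin := by
  rw [discreteTopology_iff_isOpen_singleton]
  rintro ⟨_, t, rfl⟩
  convert (isOpen_fin t).preimage (continuous_subtype_val (p := IsFin)) using 1
  ext c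
  simp [Subtype.ext_iff]

/-- The one-point compactification case. -/
lemma onePoint_continuous {K : Type*} [TopologicalSpace K] [T2Space K] {F : NStar → K}
    (hF : Continuous F) {y : K} (hy : ∀ t, F (lim t) = y) :
    Continuous (fun z : OnePoint NFin => z.elim y (fun c => F c.1)) := by
  rw [OnePoint.continuous_iff_from_discrete]
  change Filter.Tendsto (fun c : NFin => F c.1) Filter.cofinite (𝓝 y)
  have hinf : ∀ b, F (inf b) = y := by
    intro b
    by_contra hne
    obtain ⟨n, hn⟩ := inf_nhds_aux (hF.isOpen_preimage _ (isOpen_compl_singleton (x := y))) b hne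
    exact hn (mem_cyl_lim.2 (List.prefix_refl (rst b n))) (hy _)
  intro V hV
  obtain ⟨O, hOV, hO, hyO⟩ := mem_nhds_iff.1 hV
  rw [Filter.mem_map, Filter.mem_cofinite]
  have hcomp : IsCompact (F ⁻¹' Oᶜ) := (hO.isClosed_compl.preimage hF).isCompact
  have hsub : F ⁻¹' Oᶜ ⊆ ⋃ t : List ℕ, {fin t} := by
    intro c hc
    cases c with
    | fin t => simp
    | lim t => exact (hc (by rw [hy]; exact hyO)).elim
    | inf b => exact (hc (by rw [hinf]; exact hyO)).elim
  obtain ⟨T, hT⟩ := hcomp.elim_finite_subcover _ (fun t => isOpen_fin t) hsub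
  have hfin : (F ⁻¹' Oᶜ).Finite := (T.finite_toSet.biUnion fun t _ => Set.finite_singleton (fin t)).subset hT
  refine (hfin.preimage (f := fun c : NFin => c.1) Subtype.val_injective.injOn).subset ?_
  intro c hc hcO
  exact hc (hOV hcO)

theorem main_aux {X K : Type*} [TopologicalSpace X] [MetricSpace K] [CompactSpace K] {j : X → K}
    (hj : IsEmbedding j) (hX : IsAnalytic X) (φ : NLim → X) :
    ∃ π : List ℕ → List ℕ, MeetEmbedding π ∧
      ((∃ x, ∀ c, (φ ∘ hatLim π) c = x) ∨
        (Function.Injective (φ ∘ hatLim π) ∧ Continuous (φ ∘ hatLim π) ∧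
          IsClosedMap (φ ∘ hatLim π)) ∨
        (∃ ψ : NNStar → X, Function.Injective ψ ∧ Continuous ψ ∧ IsClosedMap ψ ∧
          ∀ c : NLim, ψ c.toNN = (φ ∘ hatLim π) c) ∨
        (∃ ψ : NFin → X, Function.Injective ψ ∧ Continuous ψ ∧ IsClosedMap ψ ∧
          ∀ t : List ℕ, ψ (finPt t) = (φ ∘ hatLim π) (limPt t)) ∨
        (∃ ψ : OnePoint NFin → X, Function.Injective ψ ∧ Continuous ψ ∧ IsClosedMap ψ ∧
          ∀ t : List ℕ, ψ (OnePoint.some (finPt t)) = (φ ∘ hatLim π) (limPt t)) ∨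
        (∃ ψ : NFinLim → X, Function.Injective ψ ∧ Continuous ψ ∧ IsClosedMap ψ ∧
          ∀ t : List ℕ, ψ (NFin.toFinLim (finPt t)) = (φ ∘ hatLim π) (limPt t)) ∨
        (∃ ψ : NFinInf → X, Function.Injective ψ ∧ Continuous ψ ∧ IsClosedMap ψ ∧
          ∀ t : List ℕ, ψ (NFin.toFinInf (finPt t)) = (φ ∘ hatLim π) (limPt t)) ∨
        (∃ ψ : NStar → X, Function.Injective ψ ∧ Continuous ψ ∧ IsClosedMap ψ ∧
          ∀ t : List ℕ, ψ (NStar.fin t) = (φ ∘ hatLim π) (limPt t))) := by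
  obtain ⟨C, hC, g, hg, hgs⟩ := hX
  have hrange : Set.range (j ∘ g) = Set.range j := hgs.range_comp j
  obtain ⟨π, F, hπ, hF, hf, h1, h2, h3, h4⟩ :=
    core (fun t => j (φ (limPt t))) hC (hj.continuous.comp hg)
  rw [hrange] at h1 h3
  have hfr : ∀ t, F (fin t) ∈ Set.range j := fun t => ⟨_, (hf t).symm⟩
  rcases h4 with ⟨y, hy⟩ | hinj
  · -- all the limits coincide
    have constcase : ∀ (ρ : List ℕ → List ℕ) (z : K), (∀ t, F (fin (ρ t)) = z) →
        ∃ x, ∀ c, (φ ∘ hatLim (π ∘ ρ)) c = x := by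
      intro ρ z hz
      refine ⟨φ (limPt (π (ρ []))), ?_⟩
      rintro ⟨_, t, rfl⟩
      apply hj.injective
      have e1 := (hf (ρ t)).symm.trans (hz t)
      have e2 := (hf (ρ [])).symm.trans (hz [])
      exact e1.trans e2.symm
    obtain ⟨ρ, hρ, ⟨z, hz⟩ | hi⟩ := const_or_injective fun t => F (fin t)
    · exact ⟨π ∘ ρ, hπ.comp hρ, .inl (constcase ρ z hz)⟩
    obtain ⟨τ, hτ, hz | hz⟩ := colouring fun t => F (fin (ρ t)) = y
    · exact ⟨π ∘ (ρ ∘ τ), hπ.comp (hρ.comp hτ), .inl (constcase (ρ ∘ τ) y hz)⟩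
    refine ⟨π ∘ (ρ ∘ τ), hπ.comp (hρ.comp hτ), ?_⟩
    right; right; right
    have hF' : Continuous (F ∘ hat (ρ ∘ τ)) := hF.comp (continuous_hat (hρ.comp hτ))
    have hG := onePoint_continuous (y := y) hF' (fun t => hy _)
    have hGi : Function.Injective
        (fun z : OnePoint NFin => z.elim y (fun c => (F ∘ hat (ρ ∘ τ)) c.1)) := by
      intro a b
      induction a using OnePoint.rec with
      | infty =>
        induction b using OnePoint.rec with
        | infty => intro _; rfl
        | coe b =>
          obtain ⟨_, t, rfl⟩ := b
          intro e
          exact (hz t e.symm).elim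
      | coe a =>
        obtain ⟨_, s, rfl⟩ := a
        induction b using OnePoint.rec with
        | infty => intro e; exact (hz s e).elim
        | coe b =>
          obtain ⟨_, t, rfl⟩ := b
          intro e
          have h5 : τ s = τ t := hi e
          have h6 := hτ.1 h5
          subst h6
          rfl
    by_cases hyr : y ∈ Set.range j
    · right; left
      obtain ⟨ψ, p1, p2, p3, p4⟩ := closed_restrict hj hG hGi (e := id) IsEmbedding.id (by
        intro c
        simp only [Set.range_id, Set.mem_univ, iff_true]
        induction c using OnePoint.rec with
        | infty => exact hyr
        | coe c =>
          obtain ⟨_, t, rfl⟩ := c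
          exact hfr _)
      refine ⟨ψ, p1, p2, p3, fun t => hj.injective ?_⟩
      rw [p4]
      exact hf _
    · left
      obtain ⟨ψ, p1, p2, p3, p4⟩ := closed_restrict hj hG hGi
        (e := fun c : NFin => (c : OnePoint NFin)) OnePoint.isOpenEmbedding_coe.isEmbedding (by
        intro c
        induction c using OnePoint.rec with
        | infty => exact iff_of_false hyr (by simp)
        | coe c =>
          obtain ⟨_, t, rfl⟩ := c
          exact iff_of_true (hfr _) ⟨_, rfl⟩)
      refine ⟨ψ, p1, p2, p3, fun t => hj.injective ?_⟩
      rw [p4]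
      exact hf _
  rcases h2 with h2 | h2
  · have hF' : Continuous fun c : NNStar => F c.1 := hF.comp continuous_subtype_val
    have hcs : CompactSpace NNStar := by
      refine isCompact_iff_compactSpace.1 (IsClosed.isCompact (s := {c : NStar | ¬ c.IsFin}) ?_)
      have : {c : NStar | ¬ c.IsFin} = (⋃ t, {fin t})ᶜ := by
        ext c; simp [IsFin, eq_comm]
      rw [this]
      exact (isOpen_iUnion fun t => isOpen_fin t).isClosed_compl
    have hinj' : Function.Injective fun c : NNStar => F c.1 := by
      rintro ⟨c, hc⟩ ⟨d, hd⟩ e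
      rcases hinj c d e with h | ⟨t, ⟨rfl, rfl⟩ | ⟨rfl, rfl⟩⟩
      · exact Subtype.ext h
      · exact (hc ⟨t, rfl⟩).elim
      · exact (hd ⟨t, rfl⟩).elim
    refine ⟨π, hπ, ?_⟩
    rcases h3 with h3 | h3
    · right; right; left
      obtain ⟨ψ, p1, p2, p3, p4⟩ := closed_restrict hj hF' hinj' (e := id) IsEmbedding.id (by
        rintro ⟨c, hc⟩
        simp only [Set.range_id, Set.mem_univ, iff_true]
        cases c with
        | fin t => exact (hc ⟨t, rfl⟩).elim
        | lim t => rw [h2]; exact hfr t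
        | inf b => exact h3 b)
      refine ⟨ψ, p1, p2, p3, ?_⟩
      rintro ⟨_, t, rfl⟩
      apply hj.injective
      rw [p4]
      exact (h2 t).trans (hf t)
    · right; left
      have he : IsEmbedding NLim.toNN := by
        refine IsEmbedding.of_comp (g := Subtype.val) ?_ continuous_subtype_val IsEmbedding.subtypeVal
        exact continuous_subtype_val.subtype_mk _
      obtain ⟨ψ, p1, p2, p3, p4⟩ := closed_restrict hj hF' hinj' he (by
        rintro ⟨c, hc⟩
        cases c with
        | fin t => exact (hc ⟨t, rfl⟩).elim
        | lim t =>
          refine iff_of_true ?_ ⟨limPt t, rfl⟩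
          rw [h2]; exact hfr t
        | inf b =>
          refine iff_of_false (h3 b) ?_
          rintro ⟨⟨_, t, rfl⟩, h⟩
          simp [NLim.toNN] at h)
      have : ψ = φ ∘ hatLim π := by
        funext c
        obtain ⟨_, t, rfl⟩ := c
        apply hj.injective
        rw [p4]
        exact (h2 t).trans (hf t)
      rw [← this]
      exact ⟨p1, p2, p3⟩
  · have hinj' : Function.Injective F := by
      intro c d e
      rcases hinj c d e with h | ⟨t, ⟨rfl, rfl⟩ | ⟨rfl, rfl⟩⟩
      · exact h
      · exact (h2 t e.symm).elim
      · exact (h2 t e).elim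
    refine ⟨π, hπ, ?_⟩
    right; right; right
    have general : ∀ (p : NStar → Prop), (∀ c, F c ∈ Set.range j ↔ p c) →
        ∃ ψ : {c // p c} → X, Function.Injective ψ ∧ Continuous ψ ∧ IsClosedMap ψ ∧
          ∀ t (ht : p (fin t)), ψ ⟨fin t, ht⟩ = (φ ∘ hatLim π) (limPt t) := by
      intro p hp
      obtain ⟨ψ, p1, p2, p3, p4⟩ := closed_restrict hj hF hinj' (IsEmbedding.subtypeVal (p := p)) (by
        intro c; rw [hp]; simp)
      refine ⟨ψ, p1, p2, p3, fun t ht => hj.injective ?_⟩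
      rw [p4]
      exact hf t
    rcases h1 with h1 | h1 <;> rcases h3 with h3 | h3
    · right; right; right; right
      obtain ⟨ψ, p1, p2, p3, p4⟩ := closed_restrict hj hF hinj' (e := id) IsEmbedding.id (by
        intro c
        simp only [Set.range_id, Set.mem_univ, iff_true]
        cases c with
        | fin t => exact hfr t
        | lim t => exact h1 t
        | inf b => exact h3 b)
      refine ⟨ψ, p1, p2, p3, fun t => hj.injective ?_⟩
      rw [p4]
      exact hf t
    · right; right; left
      obtain ⟨ψ, p1, p2, p3, p4⟩ := general (fun c => ¬ c.IsInf) (by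
        intro c
        cases c with
        | fin t => exact iff_of_true (hfr t) (by simp [IsInf])
        | lim t => exact iff_of_true (h1 t) (by simp [IsInf])
        | inf b => exact iff_of_false (h3 b) (by simp [IsInf]))
      exact ⟨ψ, p1, p2, p3, fun t => p4 t _⟩
    · right; right; right; left
      obtain ⟨ψ, p1, p2, p3, p4⟩ := general (fun c => ¬ c.IsLim) (by
        intro c
        cases c with
        | fin t => exact iff_of_true (hfr t) (by simp [IsLim])
        | lim t => exact iff_of_false (h1 t) (by simp [IsLim])
        | inf b => exact iff_of_true (h3 b) (by simp [IsLim]))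
      exact ⟨ψ, p1, p2, p3, fun t => p4 t _⟩
    · left
      obtain ⟨ψ, p1, p2, p3, p4⟩ := general IsFin (by
        intro c
        cases c with
        | fin t => exact iff_of_true (hfr t) (by simp [IsFin])
        | lim t => exact iff_of_false (h1 t) (by simp [IsFin])
        | inf b => exact iff_of_false (h3 b) (by simp [IsFin]))
      exact ⟨ψ, p1, p2, p3, fun t => p4 t _⟩

end Assembly

/-- stabilization of functions on `ℕ^ℕ_* ∖ ℕ^ℕ`. -/
theorem stmt_16 {X : Type*} [MetricSpace X] (hX : IsAnalytic X) (φ : NLim → X) :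
    ∃ π : List ℕ → List ℕ, MeetEmbedding π ∧
      ((∃ x, ∀ c, (φ ∘ hatLim π) c = x) ∨
        (Function.Injective (φ ∘ hatLim π) ∧ Continuous (φ ∘ hatLim π) ∧
          IsClosedMap (φ ∘ hatLim π)) ∨
        (∃ ψ : NNStar → X, Function.Injective ψ ∧ Continuous ψ ∧ IsClosedMap ψ ∧
          ∀ c : NLim, ψ c.toNN = (φ ∘ hatLim π) c) ∨
        (∃ ψ : NFin → X, Function.Injective ψ ∧ Continuous ψ ∧ IsClosedMap ψ ∧
          ∀ t : List ℕ, ψ (finPt t) = (φ ∘ hatLim π) (limPt t)) ∨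
        (∃ ψ : OnePoint NFin → X, Function.Injective ψ ∧ Continuous ψ ∧ IsClosedMap ψ ∧
          ∀ t : List ℕ, ψ (OnePoint.some (finPt t)) = (φ ∘ hatLim π) (limPt t)) ∨
        (∃ ψ : NFinLim → X, Function.Injective ψ ∧ Continuous ψ ∧ IsClosedMap ψ ∧
          ∀ t : List ℕ, ψ (NFin.toFinLim (finPt t)) = (φ ∘ hatLim π) (limPt t)) ∨
        (∃ ψ : NFinInf → X, Function.Injective ψ ∧ Continuous ψ ∧ IsClosedMap ψ ∧
          ∀ t : List ℕ, ψ (NFin.toFinInf (finPt t)) = (φ ∘ hatLim π) (limPt t)) ∨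
        (∃ ψ : NStar → X, Function.Injective ψ ∧ Continuous ψ ∧ IsClosedMap ψ ∧
          ∀ t : List ℕ, ψ (NStar.fin t) = (φ ∘ hatLim π) (limPt t))) := by
  have hsep : SeparableSpace X := by
    obtain ⟨C, -, f, hf, hs⟩ := hX
    exact hs.denseRange.separableSpace hf
  obtain ⟨j, hj⟩ := Metric.PiNatEmbed.exists_embedding_to_hilbert_cube (X := X)
  letI : MetricSpace (ℕ → unitInterval) := metrizableSpaceMetric _
  exact main_aux hj hX φ
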